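/- Let k ∈ (0, 1), let m, n be relatively prime positive integers, and suppose ω = πm/(nkK(k)), so that 2πm/ω = 2nkK(k). Then for all real β, δ, θ, the subharmonic Melnikov integrals along the rotational orbits x̃^k_± evaluate as ∫₀^{2πm/ω} x̃^k_{±,2}(t)(β cos(ωt + θ) − δ x̃^k_{±,2}(t)) dt = −8nδ E(k)/k ± J̃₂ β cos θ, where J̃₂ = 2π sech(kωK(k')) if n = 1, and J̃₂ = 0 if n ≠ 1. -/

import Mathlib

open Real

/-- The complete elliptic integral of the first kind. -/
noncomputable def Kell (k : ℝ) : ℝ :=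
  ∫ φ in (0 : ℝ)..(π / 2), 1 / Real.sqrt (1 - k ^ 2 * Real.sin φ ^ 2)

/-- The complete elliptic integral of the second kind. -/
noncomputable def Eell (k : ℝ) : ℝ :=
  ∫ φ in (0 : ℝ)..(π / 2), Real.sqrt (1 - k ^ 2 * Real.sin φ ^ 2)

open MeasureTheory Set Filter Topology

/-- The incomplete elliptic integral of the first kind. -/
noncomputable def ellipticF (k φ : ℝ) : ℝ :=
  ∫ s in (0 : ℝ)..φ, 1 / √(1 - k ^ 2 * sin s ^ 2)

section RealElliptic

variable {k : ℝ}

lemma one_sub_mul_sin_sq_pos (hk : k ∈ Ioo (0 : ℝ) 1) (φ : ℝ) :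
    0 < 1 - k ^ 2 * sin φ ^ 2 := by
  have h1 : k ^ 2 < 1 := by nlinarith [hk.1, hk.2]
  nlinarith [sin_sq_le_one φ, sq_nonneg k, sq_nonneg (sin φ)]

lemma sqrt_one_sub_mul_sin_sq_pos (hk : k ∈ Ioo (0 : ℝ) 1) (φ : ℝ) :
    0 < √(1 - k ^ 2 * sin φ ^ 2) :=
  sqrt_pos.2 (one_sub_mul_sin_sq_pos hk φ)

lemma continuous_sqrt_one_sub_mul_sin_sq (k : ℝ) :
    Continuous fun φ : ℝ ↦ √(1 - k ^ 2 * sin φ ^ 2) := by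
  fun_prop

lemma continuous_one_div_sqrt_one_sub_mul_sin_sq (hk : k ∈ Ioo (0 : ℝ) 1) :
    Continuous fun φ : ℝ ↦ 1 / √(1 - k ^ 2 * sin φ ^ 2) :=
  continuous_const.div (continuous_sqrt_one_sub_mul_sin_sq k)
    fun φ ↦ (sqrt_one_sub_mul_sin_sq_pos hk φ).ne'

/-- Integrals over `[0, π]` of even `π`-periodic functions are twice those over `[0, π / 2]`. -/
lemma integral_zero_pi_eq_two_mul {g : ℝ → ℝ} (hg : Continuous g) (h : ∀ s, g (π - s) = g s) :
    ∫ s in (0 : ℝ)..π, g s = 2 * ∫ s in (0 : ℝ)..(π / 2), g s := by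
  rw [← intervalIntegral.integral_add_adjacent_intervals (hg.intervalIntegrable 0 (π / 2))
    (hg.intervalIntegrable (π / 2) π)]
  have := intervalIntegral.integral_comp_sub_left (a := 0) (b := π / 2) g π
  simp only [h, sub_zero, sub_half] at this
  rw [← this]
  ring

lemma integral_zero_nat_mul_pi {g : ℝ → ℝ} (hg : Continuous g) (h : ∀ s, g (s + π) = g s)
    (n : ℕ) : ∫ s in (0 : ℝ)..(n * π), g s = n * ∫ s in (0 : ℝ)..π, g s := by
  have hp : Function.Periodic g π := h
  have := hp.intervalIntegral_add_zsmul_eq n 0 fun _ _ ↦ hg.intervalIntegrable _ _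
  simpa using this

lemma hasDerivAt_ellipticF (hk : k ∈ Ioo (0 : ℝ) 1) (φ : ℝ) :
    HasDerivAt (ellipticF k) (1 / √(1 - k ^ 2 * sin φ ^ 2)) φ :=
  (continuous_one_div_sqrt_one_sub_mul_sin_sq hk).integral_hasStrictDerivAt 0 φ |>.hasDerivAt

lemma continuous_ellipticF (hk : k ∈ Ioo (0 : ℝ) 1) : Continuous (ellipticF k) :=
  continuous_iff_continuousAt.2 fun φ ↦ (hasDerivAt_ellipticF hk φ).continuousAt

@[simp] lemma ellipticF_zero (k : ℝ) : ellipticF k 0 = 0 := by simp [ellipticF]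

@[simp] lemma ellipticF_pi_div_two (k : ℝ) : ellipticF k (π / 2) = Kell k := rfl

lemma strictMono_ellipticF (hk : k ∈ Ioo (0 : ℝ) 1) : StrictMono (ellipticF k) := by
  refine strictMono_of_deriv_pos fun φ ↦ ?_
  rw [(hasDerivAt_ellipticF hk φ).deriv]
  exact one_div_pos.2 (sqrt_one_sub_mul_sin_sq_pos hk φ)

lemma Kell_pos (hk : k ∈ Ioo (0 : ℝ) 1) : 0 < Kell k := by
  rw [← ellipticF_pi_div_two, ← ellipticF_zero k]
  exact strictMono_ellipticF hk (by positivity)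

lemma ellipticF_nat_mul_pi (hk : k ∈ Ioo (0 : ℝ) 1) (n : ℕ) :
    ellipticF k (n * π) = 2 * n * Kell k := by
  have hc := continuous_one_div_sqrt_one_sub_mul_sin_sq hk
  rw [ellipticF, integral_zero_nat_mul_pi hc (by simp),
    integral_zero_pi_eq_two_mul hc (by simp), Kell]
  ring

lemma ellipticF_pi (hk : k ∈ Ioo (0 : ℝ) 1) : ellipticF k π = 2 * Kell k := by
  simpa using ellipticF_nat_mul_pi hk 1

lemma ellipticF_add_pi (hk : k ∈ Ioo (0 : ℝ) 1) (φ : ℝ) :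
    ellipticF k (φ + π) = ellipticF k φ + 2 * Kell k := by
  have hc := continuous_one_div_sqrt_one_sub_mul_sin_sq hk
  have h := intervalIntegral.integral_comp_add_right (a := 0) (b := φ)
    (fun s ↦ 1 / √(1 - k ^ 2 * sin s ^ 2)) π
  simp only [sin_add_pi, neg_sq, zero_add] at h
  rw [← ellipticF_pi hk, add_comm (ellipticF k φ), ellipticF, ellipticF, ellipticF, h,
    intervalIntegral.integral_add_adjacent_intervals (hc.intervalIntegrable _ _)
      (hc.intervalIntegrable _ _)]

lemma ellipticF_pi_sub (hk : k ∈ Ioo (0 : ℝ) 1) (φ : ℝ) :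
    ellipticF k (π - φ) = 2 * Kell k - ellipticF k φ := by
  have hc := continuous_one_div_sqrt_one_sub_mul_sin_sq hk
  have h := intervalIntegral.integral_comp_sub_left (a := 0) (b := φ)
    (fun s ↦ 1 / √(1 - k ^ 2 * sin s ^ 2)) π
  simp only [sin_pi_sub, sub_zero] at h
  rw [eq_sub_iff_add_eq, ← ellipticF_pi hk, ellipticF, ellipticF, ellipticF, h,
    intervalIntegral.integral_add_adjacent_intervals (hc.intervalIntegrable _ _)
      (hc.intervalIntegrable _ _)]

lemma integral_sqrt_zero_nat_mul_pi (k : ℝ) (n : ℕ) :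
    ∫ s in (0 : ℝ)..(n * π), √(1 - k ^ 2 * sin s ^ 2) = 2 * n * Eell k := by
  have hc := continuous_sqrt_one_sub_mul_sin_sq k
  rw [integral_zero_nat_mul_pi hc (by simp), integral_zero_pi_eq_two_mul hc (by simp), Eell]
  ring

/-- The imaginary-argument form of the complementary elliptic integral, obtained by the
substitution `sinh y = tan φ`. -/
lemma integral_one_div_sqrt_one_add_mul_sinh_sq (hk : k ∈ Ioo (0 : ℝ) 1) (Y : ℝ) :
    ∫ y in (0 : ℝ)..Y, 1 / √(1 + k ^ 2 * sinh y ^ 2)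
      = ellipticF (√(1 - k ^ 2)) (arctan (sinh Y)) := by
  have hk1 : k ^ 2 < 1 := by nlinarith [hk.1, hk.2]
  have hk' : √(1 - k ^ 2) ∈ Ioo (0 : ℝ) 1 :=
    ⟨sqrt_pos.2 (by linarith), by
      rw [sqrt_lt' one_pos]; nlinarith [pow_pos hk.1 2]⟩
  have hd (y : ℝ) : HasDerivAt (fun y ↦ arctan (sinh y)) (1 / cosh y) y := by
    convert! (hasDerivAt_sinh y).arctan using 1
    have := cosh_pos y
    rw [← cosh_sq']
    field_simp
  have h := intervalIntegral.integral_comp_mul_deriv (a := 0) (b := Y) (fun y _ ↦ hd y)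
    (continuous_const.div continuous_cosh fun y ↦ (cosh_pos y).ne').continuousOn
    (continuous_one_div_sqrt_one_sub_mul_sin_sq hk')
  simp only [sinh_zero, arctan_zero] at h
  rw [ellipticF, ← h]
  refine intervalIntegral.integral_congr fun y _ ↦ ?_
  have hc := cosh_pos y
  have h2 : 1 - √(1 - k ^ 2) ^ 2 * sin (arctan (sinh y)) ^ 2
      = (1 + k ^ 2 * sinh y ^ 2) / cosh y ^ 2 := by
    rw [sq_sqrt (by linarith), sin_arctan, div_pow, ← cosh_sq', sqrt_sq hc.le]
    field_simp
    rw [cosh_sq']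
    ring
  simp only [Function.comp_apply, h2]
  rw [sqrt_div (by positivity), sqrt_sq hc.le]
  field_simp

lemma tendsto_integral_one_div_sqrt_one_add_mul_sinh_sq (hk : k ∈ Ioo (0 : ℝ) 1) :
    Tendsto (fun Y : ℝ ↦ ∫ y in (0 : ℝ)..Y, 1 / √(1 + k ^ 2 * sinh y ^ 2)) atTop
      (𝓝 (Kell (√(1 - k ^ 2)))) := by
  have hk1 : k ^ 2 < 1 := by nlinarith [hk.1, hk.2]
  have hk' : √(1 - k ^ 2) ∈ Ioo (0 : ℝ) 1 :=
    ⟨sqrt_pos.2 (by linarith), by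
      rw [sqrt_lt' one_pos]; nlinarith [pow_pos hk.1 2]⟩
  simp_rw [integral_one_div_sqrt_one_add_mul_sinh_sq hk]
  rw [← ellipticF_pi_div_two]
  refine ((continuous_ellipticF hk').tendsto _).comp ?_
  refine (tendsto_nhds_of_tendsto_nhdsWithin tendsto_arctan_atTop).comp ?_
  exact sinhOrderIso.tendsto_atTop

end RealElliptic

/-- The branch of `1 / √(1 - k² sin² z)` that is continuous on the half-strip
`0 ≤ re z ≤ π / 2`, `0 ≤ im z`, away from the branch point on the right-hand side. -/
noncomputable def ellipticIntegrand (k : ℝ) (z : ℂ) : ℂ :=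
  Complex.exp (π / 4 * Complex.I) *
    (Complex.I * (1 - (k : ℂ) ^ 2 * Complex.sin z ^ 2)) ^ (-(1 / 2) : ℂ)

section Integrand

open Complex (I)

variable {k b x y : ℝ}

lemma exp_mul_I_mul_cpow {r : ℝ} (hr : 0 < r) :
    Complex.exp (π / 4 * I) * (I * r) ^ (-(1 / 2) : ℂ) = ((1 / √r : ℝ) : ℂ) := by
  have h0 : I * (r : ℂ) ≠ 0 := mul_ne_zero Complex.I_ne_zero (by exact_mod_cast hr.ne')
  rw [Complex.cpow_def_of_ne_zero h0, mul_comm I, Complex.log_ofReal_mul hr Complex.I_ne_zero,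
    Complex.log_I, ← Complex.exp_add]
  have h1 : 1 / √r = Real.exp (Real.log r * (-(1 / 2))) := by
    rw [← rpow_def_of_pos hr, sqrt_eq_rpow, rpow_neg hr.le, one_div]
  rw [h1]
  push_cast
  congr 1
  ring

lemma exp_mul_I_mul_neg_cpow {r : ℝ} (hr : 0 < r) :
    Complex.exp (π / 4 * I) * (I * (-r : ℝ)) ^ (-(1 / 2) : ℂ) = I * ((1 / √r : ℝ) : ℂ) := by
  have h0 : (r : ℂ) * (-I) ≠ 0 := mul_ne_zero (by exact_mod_cast hr.ne') (by simp)
  have h2 : I * ((-r : ℝ) : ℂ) = r * (-I) := by push_cast; ring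
  rw [h2, Complex.cpow_def_of_ne_zero h0, Complex.log_ofReal_mul hr (by simp),
    Complex.log_neg_I, ← Complex.exp_add]
  have h1 : 1 / √r = Real.exp (Real.log r * (-(1 / 2))) := by
    rw [← rpow_def_of_pos hr, sqrt_eq_rpow, rpow_neg hr.le, one_div]
  rw [h1]
  push_cast
  nth_rewrite 3 [← Complex.exp_pi_div_two_mul_I]
  rw [← Complex.exp_add]
  congr 1
  ring

lemma one_sub_mul_sin_sq_re_im (k x y : ℝ) :
    1 - (k : ℂ) ^ 2 * Complex.sin (x + y * I) ^ 2
      = ((1 - k ^ 2 * (sin x ^ 2 * cosh y ^ 2 - cos x ^ 2 * sinh y ^ 2) : ℝ) : ℂ)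
        + ((-(2 * k ^ 2 * (sin x * cos x * cosh y * sinh y)) : ℝ) : ℂ) * I := by
  rw [Complex.sin_add_mul_I]
  push_cast
  linear_combination (-(k : ℂ) ^ 2 * Complex.cos x ^ 2 * Complex.sinh y ^ 2) * Complex.I_sq

lemma normSq_one_sub_mul_sin_sq (k x y : ℝ) :
    Complex.normSq (1 - (k : ℂ) ^ 2 * Complex.sin (x + y * I) ^ 2)
      = (1 - k ^ 2 * cosh y ^ 2) ^ 2
        + k ^ 2 * cos x ^ 2 * (2 + 4 * sinh y ^ 2 - k ^ 2 * (1 + sin x ^ 2 + 2 * sinh y ^ 2)) := by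
  rw [one_sub_mul_sin_sq_re_im, Complex.normSq_add_mul_I]
  have h1 := cosh_sq' y
  have h2 := cos_sq' x
  simp only [mul_pow, neg_sq, h1, h2]
  ring

lemma abs_one_sub_mul_cosh_sq_le (hk : k ∈ Ioo (0 : ℝ) 1) (x y : ℝ) :
    |1 - k ^ 2 * cosh y ^ 2| ≤ ‖1 - (k : ℂ) ^ 2 * Complex.sin (x + y * I) ^ 2‖ := by
  refine abs_le_of_sq_le_sq ?_ (norm_nonneg _)
  rw [← Complex.normSq_eq_norm_sq, normSq_one_sub_mul_sin_sq, le_add_iff_nonneg_right]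
  have h1 : k ^ 2 < 1 := by nlinarith [hk.1, hk.2]
  have h2 := sin_sq_le_one x
  have : 0 ≤ 2 + 4 * sinh y ^ 2 - k ^ 2 * (1 + sin x ^ 2 + 2 * sinh y ^ 2) := by
    nlinarith [sq_nonneg (sinh y), sq_nonneg (sin x)]
  positivity

lemma one_sub_mul_cosh_sq_pos (hk : 0 < k) (hkb : k * cosh b = 1) (hy : 0 ≤ y) (h : y < b) :
    0 < 1 - k ^ 2 * cosh y ^ 2 := by
  have h1 : cosh y < cosh b := by
    rw [cosh_lt_cosh, abs_of_nonneg hy, abs_of_pos (hy.trans_lt h)]; exact h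
  have h2 := cosh_pos y
  have h3 : k * cosh y < 1 := by nlinarith
  nlinarith [mul_pos hk h2]

lemma one_sub_mul_cosh_sq_neg (hk : 0 < k) (hb : 0 < b) (hkb : k * cosh b = 1) (h : b < y) :
    1 - k ^ 2 * cosh y ^ 2 < 0 := by
  have h1 : cosh b < cosh y := by
    rw [cosh_lt_cosh, abs_of_pos hb, abs_of_pos (hb.trans h)]; exact h
  have h3 : 1 < k * cosh y := by nlinarith
  nlinarith

lemma one_sub_mul_cosh_sq_ne_zero (hk : 0 < k) (hb : 0 < b) (hkb : k * cosh b = 1)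
    (hy : 0 ≤ y) (h : y ≠ b) : 1 - k ^ 2 * cosh y ^ 2 ≠ 0 :=
  h.lt_or_gt.elim (fun h ↦ (one_sub_mul_cosh_sq_pos hk hkb hy h).ne')
    fun h ↦ (one_sub_mul_cosh_sq_neg hk hb hkb h).ne

lemma I_mul_mem_slitPlane (hk : k ∈ Ioo (0 : ℝ) 1) (hb : 0 < b) (hkb : k * cosh b = 1)
    (hx : x ∈ Icc 0 (π / 2)) (hy : 0 ≤ y) (h : x < π / 2 ∨ y ≠ b) :
    I * (1 - (k : ℂ) ^ 2 * Complex.sin (x + y * I) ^ 2) ∈ Complex.slitPlane := by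
  have hW : 0 < Complex.normSq (1 - (k : ℂ) ^ 2 * Complex.sin (x + y * I) ^ 2) := by
    rcases h with h | h
    · rw [normSq_one_sub_mul_sin_sq]
      have h1 : k ^ 2 < 1 := by nlinarith [hk.1, hk.2]
      have h2 := sin_sq_le_one x
      have : 0 < 2 + 4 * sinh y ^ 2 - k ^ 2 * (1 + sin x ^ 2 + 2 * sinh y ^ 2) := by
        nlinarith [sq_nonneg (sinh y), sq_nonneg (sin x)]
      have hc : 0 < cos x := cos_pos_of_mem_Ioo ⟨by linarith [hx.1, pi_pos], h⟩
      have := hk.1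
      positivity
    · rw [Complex.normSq_eq_norm_sq]
      have := abs_one_sub_mul_cosh_sq_le hk x y
      have h2 := abs_pos.2 (one_sub_mul_cosh_sq_ne_zero hk.1 hb hkb hy h)
      exact pow_pos (h2.trans_le this) 2
  rw [one_sub_mul_sin_sq_re_im] at hW ⊢
  rw [Complex.normSq_add_mul_I] at hW
  rw [Complex.mem_slitPlane_iff]
  by_contra! hcon
  obtain ⟨h1, h2⟩ := hcon
  simp only [Complex.mul_re, Complex.mul_im, Complex.I_re, Complex.I_im, Complex.add_re,
    Complex.add_im, Complex.ofReal_re, Complex.ofReal_im] at h1 h2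
  have hs : 0 ≤ sin x := sin_nonneg_of_nonneg_of_le_pi hx.1 (by linarith [hx.2, pi_pos])
  have hc : 0 ≤ cos x := cos_nonneg_of_mem_Icc ⟨by linarith [hx.1, pi_pos], hx.2⟩
  have hS : 0 ≤ sinh y := sinh_nonneg_iff.2 hy
  have h4 : 0 ≤ 2 * k ^ 2 * (sin x * cos x * cosh y * sinh y) := by
    have := cosh_pos y
    positivity
  have h5 : 1 - k ^ 2 * (sin x ^ 2 * cosh y ^ 2 - cos x ^ 2 * sinh y ^ 2) = 0 := by linarith
  have h6 : -(2 * k ^ 2 * (sin x * cos x * cosh y * sinh y)) = 0 := by linarith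
  rw [h5, h6] at hW
  simp at hW

lemma differentiableAt_ellipticIntegrand (hk : k ∈ Ioo (0 : ℝ) 1) (hb : 0 < b)
    (hkb : k * cosh b = 1) (hx : x ∈ Icc 0 (π / 2)) (hy : 0 ≤ y) (h : x < π / 2 ∨ y ≠ b) :
    DifferentiableAt ℂ (ellipticIntegrand k) (x + y * I) := by
  have h1 := I_mul_mem_slitPlane hk hb hkb hx hy h
  unfold ellipticIntegrand
  refine (differentiableAt_const _).mul (DifferentiableAt.cpow ?_ (differentiableAt_const _) h1)
  fun_prop

lemma measurable_ellipticIntegrand (k : ℝ) : Measurable (ellipticIntegrand k) := by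
  unfold ellipticIntegrand
  fun_prop

lemma norm_ellipticIntegrand (k : ℝ) (z : ℂ) :
    ‖ellipticIntegrand k z‖ = ‖1 - (k : ℂ) ^ 2 * Complex.sin z ^ 2‖ ^ (-(1 / 2) : ℝ) := by
  have h : (-(1 / 2) : ℂ) = ((-(1 / 2) : ℝ) : ℂ) := by push_cast; rfl
  have h2 : ((π : ℂ) / 4 * I) = ((π / 4 : ℝ) : ℂ) * I := by push_cast; rfl
  rw [ellipticIntegrand, norm_mul, h2, Complex.norm_exp_ofReal_mul_I, one_mul, h,
    Complex.norm_cpow_real, norm_mul, Complex.norm_I, one_mul]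

lemma norm_ellipticIntegrand_le (hk : k ∈ Ioo (0 : ℝ) 1) (hb : 0 < b) (hkb : k * cosh b = 1)
    (x : ℝ) (hy : 0 ≤ y) (h : y ≠ b) :
    ‖ellipticIntegrand k (x + y * I)‖ ≤ |1 - k ^ 2 * cosh y ^ 2| ^ (-(1 / 2) : ℝ) := by
  rw [norm_ellipticIntegrand]
  exact rpow_le_rpow_of_nonpos (abs_pos.2 (one_sub_mul_cosh_sq_ne_zero hk.1 hb hkb hy h))
    (abs_one_sub_mul_cosh_sq_le hk x y) (by norm_num)

lemma mul_abs_sub_le_abs_one_sub_mul_cosh_sq (hk : 0 < k) (hb : 0 < b) (hkb : k * cosh b = 1)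
    (hy : 0 ≤ y) : k * b / 2 * |y - b| ≤ |1 - k ^ 2 * cosh y ^ 2| := by
  have key (u v : ℝ) (hv : 0 ≤ v) (huv : v ≤ u) : (u + v) * (u - v) / 2 ≤ cosh u - cosh v := by
    have h1 : cosh u - cosh v = 2 * (sinh ((u + v) / 2) * sinh ((u - v) / 2)) := by
      have hu : u = (u + v) / 2 + (u - v) / 2 := by ring
      have hv : v = (u + v) / 2 - (u - v) / 2 := by ring
      nth_rewrite 1 [hu]
      nth_rewrite 3 [hv]
      rw [cosh_add, cosh_sub]
      ring
    have h2 : (u + v) / 2 ≤ sinh ((u + v) / 2) := self_le_sinh_iff.2 (by linarith)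
    have h3 : (u - v) / 2 ≤ sinh ((u - v) / 2) := self_le_sinh_iff.2 (by linarith)
    rw [h1]
    nlinarith [mul_le_mul h2 h3 (by linarith) (by linarith)]
  have hC := cosh_pos y
  have h1 : 1 - k ^ 2 * cosh y ^ 2 = k * (cosh b - cosh y) * (1 + k * cosh y) := by
    linear_combination (-(1 + k * cosh y)) * hkb
  have h2 : b / 2 * |y - b| ≤ |cosh b - cosh y| := by
    rcases le_total y b with h | h
    · have := key b y hy h
      rw [abs_of_nonpos (by linarith)]
      refine le_trans ?_ (this.trans (le_abs_self _))
      nlinarith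
    · have := key y b hb.le h
      rw [abs_of_nonneg (by linarith), abs_sub_comm]
      refine le_trans ?_ (this.trans (le_abs_self _))
      nlinarith
  rw [h1, abs_mul, abs_mul, abs_of_pos hk, abs_of_pos (by positivity : 0 < 1 + k * cosh y)]
  calc k * b / 2 * |y - b| = k * (b / 2 * |y - b|) * 1 := by ring
    _ ≤ k * |cosh b - cosh y| * (1 + k * cosh y) := by
      gcongr
      nlinarith [mul_pos hk hC]

lemma ellipticIntegrand_ofReal (hk : k ∈ Ioo (0 : ℝ) 1) (x : ℝ) :
    ellipticIntegrand k x = ((1 / √(1 - k ^ 2 * sin x ^ 2) : ℝ) : ℂ) := by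
  rw [← exp_mul_I_mul_cpow (one_sub_mul_sin_sq_pos hk x), ellipticIntegrand]
  push_cast
  rfl

lemma ellipticIntegrand_mul_I (k y : ℝ) :
    ellipticIntegrand k (y * I) = ((1 / √(1 + k ^ 2 * sinh y ^ 2) : ℝ) : ℂ) := by
  rw [← exp_mul_I_mul_cpow (by positivity : 0 < 1 + k ^ 2 * sinh y ^ 2), ellipticIntegrand,
    Complex.sin_mul_I]
  push_cast
  rw [mul_pow, Complex.I_sq]
  ring_nf

lemma sin_pi_div_two_add_mul_I (y : ℝ) :
    Complex.sin ((π / 2 : ℝ) + y * I) = ((cosh y : ℝ) : ℂ) := by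
  rw [Complex.sin_add_mul_I]
  simp

lemma ellipticIntegrand_right_of_lt (hk : 0 < k) (hkb : k * cosh b = 1) (hy : 0 ≤ y)
    (h : y < b) : ellipticIntegrand k ((π / 2 : ℝ) + y * I)
      = ((1 / √(1 - k ^ 2 * cosh y ^ 2) : ℝ) : ℂ) := by
  rw [← exp_mul_I_mul_cpow (one_sub_mul_cosh_sq_pos hk hkb hy h), ellipticIntegrand,
    sin_pi_div_two_add_mul_I]
  push_cast
  rfl

lemma ellipticIntegrand_right_of_gt (hk : 0 < k) (hb : 0 < b) (hkb : k * cosh b = 1)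
    (h : b < y) : ellipticIntegrand k ((π / 2 : ℝ) + y * I)
      = I * ((1 / √(-(1 - k ^ 2 * cosh y ^ 2)) : ℝ) : ℂ) := by
  rw [← exp_mul_I_mul_neg_cpow (neg_pos.2 (one_sub_mul_cosh_sq_neg hk hb hkb h)),
    ellipticIntegrand, sin_pi_div_two_add_mul_I, neg_neg]
  push_cast
  rfl

end Integrand

/-- The holomorphic extension of `ellipticF k` to the half-strip `0 ≤ re z ≤ π / 2`, `0 ≤ im z`. -/
noncomputable def complexEllipticF (k : ℝ) (z : ℂ) : ℂ :=
  Complex.wedgeIntegral 0 z (ellipticIntegrand k)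

section Primitive

open Complex (I)

variable {k b x y : ℝ}

lemma complexEllipticF_eq (hk : k ∈ Ioo (0 : ℝ) 1) (z : ℂ) :
    complexEllipticF k z
      = ellipticF k z.re + I * ∫ s in (0 : ℝ)..z.im, ellipticIntegrand k (z.re + s * I) := by
  simp only [complexEllipticF, Complex.wedgeIntegral, Complex.zero_re, Complex.zero_im,
    Complex.ofReal_zero, zero_mul, add_zero, smul_eq_mul, ellipticIntegrand_ofReal hk,
    intervalIntegral.integral_ofReal, ellipticF]

lemma intervalIntegrable_abs_sub_rpow (c u v : ℝ) :
    IntervalIntegrable (fun s : ℝ ↦ |s - c| ^ (-(1 / 2) : ℝ)) volume u v := by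
  suffices h : ∀ u v : ℝ, IntervalIntegrable (fun s : ℝ ↦ |s| ^ (-(1 / 2) : ℝ)) volume u v by
    simpa using (h (u - c) (v - c)).comp_sub_right c
  suffices h : ∀ u : ℝ, IntervalIntegrable (fun s : ℝ ↦ |s| ^ (-(1 / 2) : ℝ)) volume 0 u from
    fun u v ↦ (h u).symm.trans (h v)
  have hpos (u : ℝ) (hu : 0 ≤ u) :
      IntervalIntegrable (fun s : ℝ ↦ |s| ^ (-(1 / 2) : ℝ)) volume 0 u := by
    refine (intervalIntegral.intervalIntegrable_rpow' (by norm_num : (-1 : ℝ) < -(1 / 2))).congr ?_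
    intro s hs
    rw [uIoc_of_le hu] at hs
    simp [abs_of_pos hs.1]
  intro u
  rcases le_total 0 u with hu | hu
  · exact hpos u hu
  · simpa using (hpos (-u) (by linarith)).comp_mul_left (c := -1)

lemma intervalIntegrable_singular_bound (c b u v : ℝ) :
    IntervalIntegrable (fun s : ℝ ↦ c * (|s - b| ^ (-(1 / 2) : ℝ) + |s - -b| ^ (-(1 / 2) : ℝ)))
      volume u v :=
  ((intervalIntegrable_abs_sub_rpow b u v).add
    (intervalIntegrable_abs_sub_rpow (-b) u v)).const_mul c

lemma norm_ellipticIntegrand_abs_le (hk : k ∈ Ioo (0 : ℝ) 1) (hb : 0 < b) (hkb : k * cosh b = 1)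
    (x : ℝ) (h : |y| ≠ b) :
    ‖ellipticIntegrand k (x + |y| * I)‖ ≤
      (k * b / 2) ^ (-(1 / 2) : ℝ) *
        (|y - b| ^ (-(1 / 2) : ℝ) + |y - -b| ^ (-(1 / 2) : ℝ)) := by
  have hk0 := hk.1
  have hpos : 0 < |(|y| - b)| := abs_pos.2 (sub_ne_zero.2 h)
  calc ‖ellipticIntegrand k (x + |y| * I)‖
      ≤ |1 - k ^ 2 * cosh |y| ^ 2| ^ (-(1 / 2) : ℝ) :=
        norm_ellipticIntegrand_le hk hb hkb x (abs_nonneg y) h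
    _ ≤ (k * b / 2 * |(|y| - b)|) ^ (-(1 / 2) : ℝ) :=
        rpow_le_rpow_of_nonpos (by positivity)
          (mul_abs_sub_le_abs_one_sub_mul_cosh_sq hk0 hb hkb (abs_nonneg y)) (by norm_num)
    _ = (k * b / 2) ^ (-(1 / 2) : ℝ) * |(|y| - b)| ^ (-(1 / 2) : ℝ) :=
        mul_rpow (by positivity) (abs_nonneg _)
    _ ≤ _ := by
        gcongr
        rcases abs_choice y with hy | hy <;> rw [hy]
        · exact le_add_of_nonneg_right (by positivity)
        · rw [show |-y - b| = |y - -b| by rw [← abs_neg]; ring_nf]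
          exact le_add_of_nonneg_left (by positivity)

lemma ae_abs_ne (b : ℝ) : ∀ᵐ s : ℝ, |s| ≠ b := by
  have : ({b, -b} : Set ℝ).Countable := by simp
  filter_upwards [this.ae_notMem volume] with s hs h
  rcases abs_choice s with h1 | h1
  · exact hs (by simp [← h, h1])
  · exact hs (by simp [← h, h1])

lemma intervalIntegrable_ellipticIntegrand (hk : k ∈ Ioo (0 : ℝ) 1) (hb : 0 < b)
    (hkb : k * cosh b = 1) (x : ℝ) {u v : ℝ} (hu : 0 ≤ u) (hv : 0 ≤ v) :
    IntervalIntegrable (fun s : ℝ ↦ ellipticIntegrand k (x + s * I)) volume u v := by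
  refine (intervalIntegrable_singular_bound ((k * b / 2) ^ (-(1 / 2) : ℝ)) b u v).mono_fun ?_ ?_
  · exact ((measurable_ellipticIntegrand k).comp (by fun_prop)).aestronglyMeasurable
  · filter_upwards [ae_restrict_of_ae (ae_abs_ne b), ae_restrict_mem measurableSet_uIoc]
      with s hs hs'
    have h0 : 0 ≤ s := by
      rcases mem_uIoc.1 hs' with h | h <;> linarith [h.1]
    refine le_trans ?_ (le_abs_self _)
    simpa [abs_of_nonneg h0] using norm_ellipticIntegrand_abs_le hk hb hkb x hs

lemma continuousOn_complexEllipticF (hk : k ∈ Ioo (0 : ℝ) 1) (hb : 0 < b)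
    (hkb : k * cosh b = 1) :
    ContinuousOn (complexEllipticF k) (Icc 0 (π / 2) ×ℂ Ici 0) := by
  let G : Icc (0 : ℝ) (π / 2) → ℝ → ℂ := fun x s ↦ ellipticIntegrand k ((x : ℝ) + |s| * I)
  have hG : Continuous fun p : Icc (0 : ℝ) (π / 2) × Ici (0 : ℝ) ↦
      ∫ s in (0 : ℝ)..(p.2 : ℝ), G p.1 s := by
    rw [continuous_iff_continuousAt]
    rintro ⟨x₀, y₀, hy₀⟩
    have h := intervalIntegral.continuousAt_parametric_primitive_of_dominated
      (F := G) (μ := volume) (a₀ := 0) (b₀ := y₀) (x₀ := x₀) _ (-1) (y₀ + 1)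
      (fun x ↦ ((measurable_ellipticIntegrand k).comp (by fun_prop)).aestronglyMeasurable)
      (Eventually.of_forall fun x ↦ ?_)
      (intervalIntegrable_singular_bound ((k * b / 2) ^ (-(1 / 2) : ℝ)) b _ _) ?_
      ⟨by norm_num, by linarith [mem_Ici.1 hy₀]⟩ ⟨by linarith [mem_Ici.1 hy₀], by simp⟩ (by simp)
    · exact h.comp (f := fun p : Icc (0 : ℝ) (π / 2) × Ici (0 : ℝ) ↦ (p.1, (p.2 : ℝ)))
        (x := (x₀, ⟨y₀, hy₀⟩)) (by fun_prop)
    · filter_upwards [ae_restrict_of_ae (ae_abs_ne b)] with s hs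
      exact norm_ellipticIntegrand_abs_le hk hb hkb x hs
    · filter_upwards [ae_restrict_of_ae (ae_abs_ne b)] with s hs
      have := (differentiableAt_ellipticIntegrand hk hb hkb x₀.2 (abs_nonneg s)
        (Or.inr hs)).continuousAt
      exact ContinuousAt.comp (f := fun x : Icc (0 : ℝ) (π / 2) ↦ ((x : ℝ) : ℂ) + |s| * I)
        this (by fun_prop)
  rw [continuousOn_iff_continuous_domRestrict]
  let e : ↥(Icc (0 : ℝ) (π / 2) ×ℂ Ici 0) → Icc (0 : ℝ) (π / 2) × Ici (0 : ℝ) :=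
    fun z ↦ (⟨z.1.re, z.2.1⟩, ⟨z.1.im, z.2.2⟩)
  have he : Continuous e := by fun_prop
  have hF := continuous_ellipticF hk
  have : Continuous fun z : ↥(Icc (0 : ℝ) (π / 2) ×ℂ Ici 0) ↦
      (ellipticF k z.1.re : ℂ) + I * ∫ s in (0 : ℝ)..((e z).2 : ℝ), G (e z).1 s := by
    have := hG.comp he
    fun_prop
  convert this using 2 with z
  rw [domRestrict_apply, complexEllipticF_eq hk]
  congr 2
  refine intervalIntegral.integral_congr fun s hs ↦ ?_
  rw [uIcc_of_le z.2.2] at hs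
  simp [G, e, abs_of_nonneg hs.1]

lemma differentiableOn_ellipticIntegrand (hk : k ∈ Ioo (0 : ℝ) 1) (hb : 0 < b)
    (hkb : k * cosh b = 1) :
    DifferentiableOn ℂ (ellipticIntegrand k) (Ico 0 (π / 2) ×ℂ Ici 0) := by
  intro z hz
  have := differentiableAt_ellipticIntegrand (x := z.re) (y := z.im) hk hb hkb
    (Ico_subset_Icc_self hz.1) hz.2 (Or.inl hz.1.2)
  rw [Complex.re_add_im] at this
  exact this.differentiableWithinAt

/-- Path independence on the half-strip: moving up and then across. -/
lemma complexEllipticF_sub_horizontal (hk : k ∈ Ioo (0 : ℝ) 1) (hb : 0 < b)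
    (hkb : k * cosh b = 1) {x₁ x₂ : ℝ} (h₁ : x₁ ∈ Ico 0 (π / 2)) (h₂ : x₂ ∈ Ico 0 (π / 2))
    (hy : 0 ≤ y) :
    complexEllipticF k (x₂ + y * I) - complexEllipticF k (x₁ + y * I)
      = ∫ s in x₁..x₂, ellipticIntegrand k (s + y * I) := by
  have hcont := continuous_one_div_sqrt_one_sub_mul_sin_sq hk
  have h := Complex.integral_boundary_rect_eq_zero_of_differentiableOn (ellipticIntegrand k)
    x₁ (x₂ + y * I) ((differentiableOn_ellipticIntegrand hk hb hkb).mono ?_)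
  · simp only [Complex.ofReal_re, Complex.ofReal_im, Complex.add_re, Complex.mul_re, Complex.I_re,
      Complex.I_im, Complex.add_im, Complex.mul_im, mul_zero, mul_one, sub_zero, add_zero, zero_add,
      zero_mul, Complex.ofReal_zero, ellipticIntegrand_ofReal hk, smul_eq_mul,
      intervalIntegral.integral_ofReal] at h
    have h3 := intervalIntegral.integral_interval_sub_left (hcont.intervalIntegrable 0 x₂)
      (hcont.intervalIntegrable 0 x₁) (μ := volume)
    rw [← h3] at h
    rw [complexEllipticF_eq hk, complexEllipticF_eq hk]
    simp only [Complex.ofReal_re, Complex.ofReal_im, Complex.add_re, Complex.mul_re, Complex.I_re,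
      Complex.I_im, Complex.add_im, Complex.mul_im, mul_zero, mul_one, sub_zero, add_zero, zero_add,
      ellipticF]
    push_cast at h ⊢
    linear_combination h
  · intro z hz
    simp only [Complex.ofReal_re, Complex.ofReal_im, Complex.add_re, Complex.mul_re, Complex.I_re,
      Complex.I_im, Complex.add_im, Complex.mul_im, mul_zero, mul_one, sub_zero, add_zero, zero_add]
      at hz
    refine ⟨?_, ?_⟩
    · exact ordConnected_Ico.uIcc_subset h₁ h₂ hz.1
    · have := hz.2
      rw [uIcc_of_le hy] at this
      exact this.1

lemma hasDerivAt_complexEllipticF (hk : k ∈ Ioo (0 : ℝ) 1) (hb : 0 < b)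
    (hkb : k * cosh b = 1) {z : ℂ} (hz : z ∈ Ioo 0 (π / 2) ×ℂ Ioi 0) :
    HasDerivAt (complexEllipticF k) (ellipticIntegrand k z) z := by
  have hopen : IsOpen (Ioo 0 (π / 2) ×ℂ Ioi 0) := isOpen_Ioo.reProdIm isOpen_Ioi
  obtain ⟨r, hr, hball⟩ := Metric.isOpen_iff.1 hopen z hz
  have hsub : Ioo 0 (π / 2) ×ℂ Ioi 0 ⊆ Ico 0 (π / 2) ×ℂ Ici 0 :=
    Complex.reProdIm_subset_iff.2 (prod_mono Ioo_subset_Ico_self Ioi_subset_Ici_self)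
  have hd : DifferentiableOn ℂ (ellipticIntegrand k) (Metric.ball z r) :=
    (differentiableOn_ellipticIntegrand hk hb hkb).mono (hball.trans hsub)
  have h := hd.isConservativeOn.hasDerivAt_wedgeIntegral hd.continuousOn
    (Metric.mem_ball_self hr)
  refine (h.const_add (complexEllipticF k z)).congr_of_eventuallyEq ?_
  filter_upwards [hopen.mem_nhds hz] with w hw
  have h1 := complexEllipticF_sub_horizontal hk hb hkb (y := z.im) (x₁ := z.re) (x₂ := w.re)
    (Ioo_subset_Ico_self hz.1) (Ioo_subset_Ico_self hw.1) (le_of_lt hz.2)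
  rw [Complex.re_add_im] at h1
  have h2 := intervalIntegral.integral_interval_sub_left
    (intervalIntegrable_ellipticIntegrand hk hb hkb w.re le_rfl (le_of_lt hw.2))
    (intervalIntegrable_ellipticIntegrand hk hb hkb w.re le_rfl (le_of_lt hz.2))
  rw [Complex.wedgeIntegral, ← h1, ← h2, complexEllipticF_eq hk w,
    complexEllipticF_eq hk (w.re + z.im * I)]
  simp
  ring

end Primitive

section Boundary

open Complex (I)

variable {k b x y : ℝ}

lemma complexEllipticF_ofReal (hk : k ∈ Ioo (0 : ℝ) 1) (x : ℝ) :
    complexEllipticF k x = ellipticF k x := by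
  simp [complexEllipticF_eq hk]

lemma complexEllipticF_mul_I (hk : k ∈ Ioo (0 : ℝ) 1) (y : ℝ) :
    complexEllipticF k (y * I)
      = I * ((∫ s in (0 : ℝ)..y, 1 / √(1 + k ^ 2 * sinh s ^ 2) : ℝ) : ℂ) := by
  simp only [complexEllipticF_eq hk, ← intervalIntegral.integral_ofReal, ← ellipticIntegrand_mul_I]
  simp

lemma complexEllipticF_right (hk : k ∈ Ioo (0 : ℝ) 1) (y : ℝ) :
    complexEllipticF k ((π / 2 : ℝ) + y * I)
      = Kell k + I * ∫ s in (0 : ℝ)..y, ellipticIntegrand k ((π / 2 : ℝ) + s * I) := by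
  rw [complexEllipticF_eq hk]
  have hre : (((π / 2 : ℝ) : ℂ) + y * I).re = π / 2 := by simp
  have him : (((π / 2 : ℝ) : ℂ) + y * I).im = y := by simp
  rw [hre, him, ellipticF_pi_div_two]

lemma complexEllipticF_right_of_le (hk : k ∈ Ioo (0 : ℝ) 1) (hkb : k * cosh b = 1)
    (hy : 0 ≤ y) (hyb : y ≤ b) :
    ∃ r : ℝ, complexEllipticF k ((π / 2 : ℝ) + y * I) = Kell k + I * r := by
  refine ⟨∫ s in (0 : ℝ)..y, 1 / √(1 - k ^ 2 * cosh s ^ 2), ?_⟩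
  rw [complexEllipticF_right hk, ← intervalIntegral.integral_ofReal]
  congr 2
  refine intervalIntegral.integral_congr_ae ?_
  filter_upwards [ae_abs_ne b] with s hs hs'
  rw [uIoc_of_le hy] at hs'
  rw [abs_of_pos hs'.1] at hs
  exact ellipticIntegrand_right_of_lt hk.1 hkb hs'.1.le ((hs'.2.trans hyb).lt_of_ne hs)

lemma complexEllipticF_right_of_ge (hk : k ∈ Ioo (0 : ℝ) 1) (hb : 0 < b) (hkb : k * cosh b = 1)
    (hy : b ≤ y) :
    ∃ r : ℝ, complexEllipticF k ((π / 2 : ℝ) + y * I)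
      = complexEllipticF k ((π / 2 : ℝ) + b * I) + r := by
  refine ⟨-∫ s in b..y, 1 / √(-(1 - k ^ 2 * cosh s ^ 2)), ?_⟩
  have h : ∫ s in b..y, ellipticIntegrand k ((π / 2 : ℝ) + s * I)
      = I * ((∫ s in b..y, 1 / √(-(1 - k ^ 2 * cosh s ^ 2)) : ℝ) : ℂ) := by
    rw [← intervalIntegral.integral_ofReal, ← intervalIntegral.integral_const_mul]
    refine intervalIntegral.integral_congr_ae (Eventually.of_forall fun s hs ↦ ?_)
    rw [uIoc_of_le hy] at hs
    exact ellipticIntegrand_right_of_gt hk.1 hb hkb hs.1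
  have hi {u v : ℝ} := intervalIntegrable_ellipticIntegrand hk hb hkb (π / 2) (u := u) (v := v)
  rw [complexEllipticF_right hk, complexEllipticF_right hk,
    ← intervalIntegral.integral_add_adjacent_intervals (hi le_rfl hb.le)
      (hi hb.le (hb.le.trans hy)), h]
  push_cast
  linear_combination ((∫ s in b..y, 1 / √(-(1 - k ^ 2 * cosh s ^ 2)) : ℝ) : ℂ) * Complex.I_sq

lemma norm_complexEllipticF_sub_le (hk : k ∈ Ioo (0 : ℝ) 1) (hb : 0 < b)
    (hkb : k * cosh b = 1) (hy : b < y) (hx : x ∈ Icc 0 (π / 2)) :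
    ‖complexEllipticF k (x + y * I) - complexEllipticF k (y * I)‖
      ≤ |1 - k ^ 2 * cosh y ^ 2| ^ (-(1 / 2) : ℝ) * (π / 2) := by
  have hy0 : 0 ≤ y := (hb.trans hy).le
  have hcl : closure (Ico 0 (π / 2)) = Icc 0 (π / 2) := closure_Ico (by positivity)
  refine le_on_closure (s := Ico 0 (π / 2))
    (f := fun x : ℝ ↦ ‖complexEllipticF k (x + y * I) - complexEllipticF k (y * I)‖)
    (g := fun _ ↦ |1 - k ^ 2 * cosh y ^ 2| ^ (-(1 / 2) : ℝ) * (π / 2)) ?_ ?_ continuousOn_const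
    (hcl ▸ hx)
  · intro x hx
    have h := complexEllipticF_sub_horizontal hk hb hkb (x₁ := 0) (x₂ := x) (y := y)
      ⟨le_rfl, by positivity⟩ hx hy0
    rw [Complex.ofReal_zero, zero_add] at h
    simp only [h]
    refine (intervalIntegral.norm_integral_le_of_norm_le_const fun s _ ↦
      norm_ellipticIntegrand_le hk hb hkb s hy0 hy.ne').trans ?_
    rw [sub_zero, abs_of_nonneg hx.1]
    gcongr
    exact hx.2.le
  · rw [hcl]
    refine (ContinuousOn.sub ?_ continuousOn_const).norm
    refine (continuousOn_complexEllipticF hk hb hkb).comp (by fun_prop) fun x hx ↦ ?_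
    simp [Complex.mem_reProdIm, hx.1, hx.2, hy0]

lemma tendsto_cosh_atTop : Tendsto cosh atTop atTop := by
  refine tendsto_atTop_mono' _ ?_ tendsto_id
  filter_upwards [eventually_ge_atTop 0] with y hy
  exact (self_le_sinh_iff.2 hy).trans (sinh_lt_cosh y).le

lemma tendsto_abs_one_sub_mul_cosh_sq_rpow (hk : 0 < k) :
    Tendsto (fun y : ℝ ↦ |1 - k ^ 2 * cosh y ^ 2| ^ (-(1 / 2) : ℝ)) atTop (𝓝 0) := by
  refine (tendsto_rpow_neg_atTop (by norm_num : (0 : ℝ) < 1 / 2)).comp ?_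
  refine tendsto_abs_atBot_atTop.comp ?_
  refine tendsto_atBot_add_const_left atTop 1 (f := fun y ↦ -(k ^ 2 * cosh y ^ 2)) ?_
  refine tendsto_neg_atTop_atBot.comp ?_
  exact ((tendsto_pow_atTop two_ne_zero).comp tendsto_cosh_atTop).const_mul_atTop (pow_pos hk 2)

lemma tendstoUniformlyOn_complexEllipticF (hk : k ∈ Ioo (0 : ℝ) 1) (hb : 0 < b)
    (hkb : k * cosh b = 1) :
    TendstoUniformlyOn (fun (y x : ℝ) ↦ complexEllipticF k (x + y * I))
      (fun _ ↦ I * Kell (√(1 - k ^ 2))) atTop (Icc 0 (π / 2)) := by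
  have h1 : Tendsto (fun y : ℝ ↦ complexEllipticF k (y * I)) atTop
      (𝓝 (I * Kell (√(1 - k ^ 2)))) := by
    simp_rw [complexEllipticF_mul_I hk]
    exact ((Complex.continuous_ofReal.tendsto _).comp
      (tendsto_integral_one_div_sqrt_one_add_mul_sinh_sq hk)).const_mul I
  have h2 := (tendsto_abs_one_sub_mul_cosh_sq_rpow hk.1).mul_const (π / 2)
  rw [zero_mul] at h2
  rw [Metric.tendstoUniformlyOn_iff]
  intro ε hε
  filter_upwards [Metric.tendsto_nhds.1 h1 (ε / 2) (by positivity),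
    h2.eventually_lt_const (half_pos hε), eventually_gt_atTop b] with y hy1 hy2 hy3 x hx
  rw [dist_comm]
  have h3 := norm_complexEllipticF_sub_le hk hb hkb hy3 hx
  rw [← dist_eq_norm] at h3
  linarith [dist_triangle (complexEllipticF k (x + y * I)) (complexEllipticF k (y * I))
    (I * Kell (√(1 - k ^ 2)))]

lemma complexEllipticF_right_im (hk : k ∈ Ioo (0 : ℝ) 1) (hb : 0 < b) (hkb : k * cosh b = 1)
    (hy : b ≤ y) :
    (complexEllipticF k ((π / 2 : ℝ) + y * I)).im = Kell (√(1 - k ^ 2)) := by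
  have him (y : ℝ) (hy : b ≤ y) : (complexEllipticF k ((π / 2 : ℝ) + y * I)).im
      = (complexEllipticF k ((π / 2 : ℝ) + b * I)).im := by
    obtain ⟨r, hr⟩ := complexEllipticF_right_of_ge hk hb hkb hy
    rw [hr, Complex.add_im, Complex.ofReal_im, add_zero]
  have h1 := (tendstoUniformlyOn_complexEllipticF hk hb hkb).tendsto_at
    (right_mem_Icc.2 (by positivity : 0 ≤ π / 2))
  have h2 := (Complex.continuous_im.tendsto _).comp h1
  rw [show (I * (Kell (√(1 - k ^ 2)) : ℂ)).im = Kell (√(1 - k ^ 2)) by simp] at h2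
  rw [him y hy]
  refine tendsto_nhds_unique (tendsto_const_nhds.congr' ?_) h2
  filter_upwards [eventually_ge_atTop b] with y hy
  exact (him y hy).symm

/-- The Fourier coefficients of the amplitude, by Cauchy's theorem on the half-strip: the function
`cos (a (F - iK'))` is real on both vertical sides and tends to `1` at infinity. -/
theorem cosh_mul_integral_cos_ellipticF (hk : k ∈ Ioo (0 : ℝ) 1) {a : ℝ} (m : ℕ)
    (ha : a * Kell k = m * π) :
    cosh (a * Kell (√(1 - k ^ 2))) * ∫ s in (0 : ℝ)..(π / 2), cos (a * ellipticF k s)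
      = π / 2 := by
  obtain ⟨b, hb, hkb⟩ : ∃ b, 0 < b ∧ k * cosh b = 1 := by
    have h1 : 1 < 1 / k := by rw [lt_div_iff₀ hk.1]; linarith [hk.2]
    refine ⟨arcosh (1 / k), arcosh_pos h1, ?_⟩
    rw [cosh_arcosh h1.le]
    field_simp [hk.1.ne']
  set K' := Kell (√(1 - k ^ 2)) with hK'
  let H : ℂ → ℂ := fun z ↦ Complex.cos (a * (complexEllipticF k z - I * K'))
  have hHc : ContinuousOn H (Icc 0 (π / 2) ×ℂ Ici 0) := by
    have := continuousOn_complexEllipticF hk hb hkb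
    fun_prop
  have hleft (y : ℝ) : ∃ r : ℝ, H (y * I) = r := by
    refine ⟨cosh (a * ((∫ s in (0 : ℝ)..y, 1 / √(1 + k ^ 2 * sinh s ^ 2)) - K')), ?_⟩
    simp only [H, complexEllipticF_mul_I hk]
    rw [Complex.ofReal_cosh, ← Complex.cos_mul_I]
    congr 1
    push_cast
    ring
  have hright (y : ℝ) (hy : 0 ≤ y) : ∃ r : ℝ, H ((π / 2 : ℝ) + y * I) = r := by
    rcases le_total y b with hyb | hyb
    · obtain ⟨r, hr⟩ := complexEllipticF_right_of_le hk hkb hy hyb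
      refine ⟨(-1) ^ m * cosh (a * (r - K')), ?_⟩
      simp only [H, hr]
      have : (a : ℂ) * (Kell k + I * r - I * K') = (a * (r - K') : ℝ) * I + m * π := by
        have ha' : (a : ℂ) * Kell k = m * π := by exact_mod_cast ha
        push_cast
        linear_combination ha'
      rw [this, Complex.cos_antiperiodic.add_nat_mul_eq m, Complex.cos_mul_I]
      push_cast
      rfl
    · refine ⟨cos (a * (complexEllipticF k ((π / 2 : ℝ) + y * I)).re), ?_⟩
      simp only [H]
      rw [Complex.ofReal_cos]
      congr 1
      nth_rewrite 1 [← Complex.re_add_im (complexEllipticF k ((π / 2 : ℝ) + y * I))]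
      rw [complexEllipticF_right_im hk hb hkb hyb]
      push_cast
      ring
  have hreal {g : ℝ → ℂ} {u v : ℝ} (hg : ∀ s ∈ uIcc u v, ∃ r : ℝ, g s = r) :
      (I * ∫ s in u..v, g s).re = 0 := by
    have : ∫ s in u..v, g s = ((∫ s in u..v, (g s).re : ℝ) : ℂ) := by
      rw [← intervalIntegral.integral_ofReal]
      refine intervalIntegral.integral_congr fun s hs ↦ ?_
      obtain ⟨r, hr⟩ := hg s hs
      simp [hr]
    rw [this]
    simp
  have hbottom : (∫ s in (0 : ℝ)..(π / 2), H s).re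
      = cosh (a * K') * ∫ s in (0 : ℝ)..(π / 2), cos (a * ellipticF k s) := by
    have hi : IntervalIntegrable (fun s : ℝ ↦ H s) volume 0 (π / 2) := by
      refine ContinuousOn.intervalIntegrable (hHc.comp (by fun_prop) fun s hs ↦ ?_)
      rw [uIcc_of_le (by positivity)] at hs
      simp [Complex.mem_reProdIm, hs.1, hs.2]
    rw [← intervalIntegral.integral_const_mul]
    have := intervalIntegral.intervalIntegral_re hi
    simp only [RCLike.re_eq_complex_re] at this
    rw [← this]
    refine intervalIntegral.integral_congr fun s _ ↦ ?_
    simp only [H, complexEllipticF_ofReal hk]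
    have : (a : ℂ) * (ellipticF k s - I * K') = (a * ellipticF k s : ℝ) + (-(a * K') : ℝ) * I := by
      push_cast; ring
    rw [this, Complex.cos_add_mul_I, ← Complex.ofReal_cos, ← Complex.ofReal_sin,
      ← Complex.ofReal_cosh, ← Complex.ofReal_sinh, cosh_neg]
    simp only [Complex.sub_re, Complex.mul_re, Complex.mul_im, Complex.ofReal_re, Complex.ofReal_im,
      Complex.I_re, Complex.I_im]
    ring
  have htop (Y : ℝ) (hY : 0 ≤ Y) : (∫ s in (0 : ℝ)..(π / 2), H (s + Y * I)).re
      = cosh (a * K') * ∫ s in (0 : ℝ)..(π / 2), cos (a * ellipticF k s) := by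
    have h := Complex.integral_boundary_rect_eq_zero_of_continuousOn_of_differentiableOn H 0
      ((π / 2 : ℝ) + Y * I) (hHc.mono ?_) ?_
    · have hre : (((π / 2 : ℝ) : ℂ) + Y * I).re = π / 2 := by simp
      have him : (((π / 2 : ℝ) : ℂ) + Y * I).im = Y := by simp
      simp only [hre, him, Complex.zero_re, Complex.zero_im, Complex.ofReal_zero, zero_mul,
        add_zero, zero_add, smul_eq_mul] at h
      have h' := congrArg Complex.re h
      rw [Complex.sub_re, Complex.add_re, Complex.sub_re, hbottom, hreal fun s _ ↦ hleft s,
        hreal fun s hs ↦ hright s (by rw [uIcc_of_le hY] at hs; exact hs.1), Complex.zero_re] at h'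
      linarith
    · refine Complex.reProdIm_subset_iff.2 (prod_mono ?_ ?_)
      · simp [uIcc_of_le pi_div_two_pos.le]
      · simpa [uIcc_of_le hY] using Icc_subset_Ici_self
    · intro z hz
      have hz' : z ∈ Ioo 0 (π / 2) ×ℂ Ioi 0 := by
        simp only [Complex.mem_reProdIm] at hz ⊢
        simp [hY, pi_div_two_pos.le] at hz
        exact ⟨hz.1, hz.2.1⟩
      have := (hasDerivAt_complexEllipticF hk hb hkb hz').differentiableAt
      exact DifferentiableAt.differentiableWithinAt (by fun_prop)
  have hlim : Tendsto (fun Y : ℝ ↦ ∫ s in (0 : ℝ)..(π / 2), H (s + Y * I)) atTop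
      (𝓝 ((π / 2 : ℝ) : ℂ)) := by
    have hcos : ContinuousAt (fun w : ℂ ↦ Complex.cos (a * (w - I * K'))) (I * K') := by fun_prop
    rw [Metric.tendsto_nhds]
    intro ε hε
    obtain ⟨δ, hδ, hcos⟩ := Metric.continuousAt_iff.1 hcos (ε / π) (by positivity)
    have hu := Metric.tendstoUniformlyOn_iff.1 (tendstoUniformlyOn_complexEllipticF hk hb hkb) δ hδ
    filter_upwards [hu, eventually_ge_atTop 0] with Y hY hY0
    have hi : IntervalIntegrable (fun s : ℝ ↦ H (s + Y * I)) volume 0 (π / 2) := by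
      refine ContinuousOn.intervalIntegrable (hHc.comp (by fun_prop) fun s hs ↦ ?_)
      rw [uIcc_of_le (by positivity)] at hs
      simp [Complex.mem_reProdIm, hs.1, hs.2, hY0]
    have h1 : ((π / 2 : ℝ) : ℂ) = ∫ _ in (0 : ℝ)..(π / 2), (1 : ℂ) := by simp
    rw [dist_eq_norm, h1, ← intervalIntegral.integral_sub hi intervalIntegrable_const]
    refine (intervalIntegral.norm_integral_le_of_norm_le_const (C := ε / π) fun s hs ↦ ?_).trans_lt
      ?_
    · rw [uIoc_of_le (by positivity)] at hs
      have h2 := hcos (by rw [dist_comm]; exact hY s ⟨hs.1.le, hs.2⟩)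
      simpa [dist_eq_norm] using h2.le
    · rw [sub_zero, abs_of_pos (by positivity)]
      field_simp
      linarith
  have h1 := (Complex.continuous_re.tendsto _).comp hlim
  refine tendsto_nhds_unique (tendsto_const_nhds.congr' ?_) (by simpa using! h1)
  filter_upwards [eventually_ge_atTop 0] with Y hY
  exact (htop Y hY).symm

end Boundary

section Melnikov

open Complex (I)

variable {k : ℝ}

lemma integral_cos_ellipticF_zero_pi (hk : k ∈ Ioo (0 : ℝ) 1) {a : ℝ} (m : ℕ)
    (ha : a * Kell k = m * π) :
    ∫ s in (0 : ℝ)..π, cos (a * ellipticF k s) = π / cosh (a * Kell (√(1 - k ^ 2))) := by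
  have hF := continuous_ellipticF hk
  have h := cosh_mul_integral_cos_ellipticF hk m ha
  have hc := cosh_pos (a * Kell (√(1 - k ^ 2)))
  rw [integral_zero_pi_eq_two_mul (by fun_prop) fun s ↦ ?_, eq_div_iff hc.ne']
  · linarith
  · rw [ellipticF_pi_sub hk, ← cos_sub_nat_mul_two_pi _ m]
    rw [show a * (2 * Kell k - ellipticF k s) = -(a * ellipticF k s) + m * (2 * π) by
      linear_combination 2 * ha, add_sub_cancel_right, cos_neg]

lemma integral_sin_ellipticF_zero_pi (hk : k ∈ Ioo (0 : ℝ) 1) {a : ℝ} (m : ℕ)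
    (ha : a * Kell k = m * π) :
    ∫ s in (0 : ℝ)..π, sin (a * ellipticF k s) = 0 := by
  have h := intervalIntegral.integral_comp_sub_left (a := 0) (b := π)
    (fun s ↦ sin (a * ellipticF k s)) π
  have h2 (s : ℝ) : sin (a * ellipticF k (π - s)) = -sin (a * ellipticF k s) := by
    rw [ellipticF_pi_sub hk, ← sin_neg, ← sin_sub_nat_mul_two_pi _ m,
      show a * (2 * Kell k - ellipticF k s) = -(a * ellipticF k s) + m * (2 * π) by
        linear_combination 2 * ha, add_sub_cancel_right]
  simp only [h2, sub_self, sub_zero, intervalIntegral.integral_neg] at h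
  linarith

lemma integral_exp_ellipticF_eq_zero (hk : k ∈ Ioo (0 : ℝ) 1) {a : ℝ} {m n : ℕ}
    (hmn : Nat.Coprime m n) (hn : n ≠ 1) (ha : a * (n * Kell k) = m * π) :
    ∫ s in (0 : ℝ)..(n * π), Complex.exp ((a * ellipticF k s : ℝ) * I) = 0 := by
  set g : ℝ → ℂ := fun s ↦ Complex.exp ((a * ellipticF k s : ℝ) * I) with hg
  have hshift (s : ℝ) : g (s + π) = Complex.exp ((2 * a * Kell k : ℝ) * I) * g s := by
    simp only [hg]
    rw [← Complex.exp_add, ellipticF_add_pi hk]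
    congr 1
    push_cast
    ring
  have hper : Function.Periodic g (n * π) := by
    intro s
    have h := Function.Semiconj.iterate_right (f := g) (ga := fun s ↦ s + π)
      (gb := fun z ↦ Complex.exp ((2 * a * Kell k : ℝ) * I) * z) hshift n s
    rw [add_right_iterate, mul_left_iterate, nsmul_eq_mul, ← Complex.exp_nat_mul] at h
    rw [h, show (n : ℂ) * ((2 * a * Kell k : ℝ) * I) = m * (2 * π * I) by
      have ha' : (a : ℂ) * (n * Kell k) = m * π := by exact_mod_cast ha
      push_cast
      linear_combination 2 * I * ha', Complex.exp_nat_mul_two_pi_mul_I]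
    exact one_mul _
  have hne : Complex.exp ((2 * a * Kell k : ℝ) * I) ≠ 1 := by
    rw [Ne, Complex.exp_eq_one_iff]
    rintro ⟨j, hj⟩
    have hj' : 2 * a * Kell k = j * (2 * π) := by
      have := congrArg Complex.im hj
      simpa using this
    have hmj : (m : ℝ) = n * j := by
      apply mul_right_cancel₀ pi_pos.ne'
      linear_combination (n : ℝ) / 2 * hj' - ha
    have hdvd : (n : ℤ) ∣ m := ⟨j, by exact_mod_cast hmj⟩
    exact hn (Nat.eq_one_of_dvd_coprimes hmn (Int.natCast_dvd_natCast.1 hdvd) dvd_rfl)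
  have h1 := hper.intervalIntegral_add_eq 0 π
  have h2 : ∫ s in (0 : ℝ)..(n * π), g (s + π) = ∫ s in π..(π + n * π), g s := by
    rw [intervalIntegral.integral_comp_add_right, zero_add, add_comm]
  simp only [hshift, intervalIntegral.integral_const_mul] at h2
  rw [← h1, zero_add] at h2
  have h3 : (Complex.exp ((2 * a * Kell k : ℝ) * I) - 1) * ∫ s in (0 : ℝ)..(n * π), g s = 0 := by
    linear_combination h2
  exact (mul_eq_zero.1 h3).resolve_left (sub_ne_zero.2 hne)

lemma integral_cos_ellipticF_add (hk : k ∈ Ioo (0 : ℝ) 1) {a : ℝ} {m n : ℕ}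
    (hmn : Nat.Coprime m n) (ha : a * (n * Kell k) = m * π) (θ : ℝ) :
    ∫ s in (0 : ℝ)..(n * π), cos (a * ellipticF k s + θ)
      = (if n = 1 then π / cosh (a * Kell (√(1 - k ^ 2))) else 0) * cos θ := by
  have hF := continuous_ellipticF hk
  have hsplit : ∫ s in (0 : ℝ)..(n * π), cos (a * ellipticF k s + θ)
      = (∫ s in (0 : ℝ)..(n * π), cos (a * ellipticF k s)) * cos θ
        - (∫ s in (0 : ℝ)..(n * π), sin (a * ellipticF k s)) * sin θ := by
    rw [← intervalIntegral.integral_mul_const, ← intervalIntegral.integral_mul_const,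
      ← intervalIntegral.integral_sub (Continuous.intervalIntegrable (by fun_prop) _ _)
        (Continuous.intervalIntegrable (by fun_prop) _ _)]
    simp only [cos_add]
  rw [hsplit]
  split_ifs with hn
  · subst hn
    rw [Nat.cast_one, one_mul] at ha ⊢
    rw [integral_cos_ellipticF_zero_pi hk m ha, integral_sin_ellipticF_zero_pi hk m ha]
    ring
  · have h := integral_exp_ellipticF_eq_zero hk hmn hn ha
    have hi : IntervalIntegrable (fun s : ℝ ↦ Complex.exp ((a * ellipticF k s : ℝ) * I))
        volume 0 (n * π) := Continuous.intervalIntegrable (by fun_prop) _ _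
    have hre := intervalIntegral.intervalIntegral_re hi
    have him := intervalIntegral.intervalIntegral_im hi
    simp only [RCLike.re_eq_complex_re, RCLike.im_eq_complex_im, Complex.exp_ofReal_mul_I_re,
      Complex.exp_ofReal_mul_I_im, h, Complex.zero_re, Complex.zero_im] at hre him
    rw [hre, him]
    ring

/-- Along a rotational orbit the half angle `φ` satisfies `φ' = √(1 - k² sin² φ) / k`. -/
lemma sign_mul_velocity_eq (hk : 0 < k) (hk1 : k < 1) {σ : ℝ} (hσ : σ = 1 ∨ σ = -1)
    {p q : ℝ → ℝ} (hp0 : p 0 = 0) (hq0 : q 0 = σ * (2 / k))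
    (hp : ∀ t, HasDerivAt p (q t) t) (hq : ∀ t, HasDerivAt q (-sin (p t)) t) (t : ℝ) :
    σ * q t = 2 / k * √(1 - k ^ 2 * sin (σ * p t / 2) ^ 2) := by
  have hσ2 : σ ^ 2 = 1 := by rcases hσ with rfl | rfl <;> norm_num
  have hsin (t : ℝ) : sin (σ * p t / 2) ^ 2 = (1 - cos (p t)) / 2 := by
    have : cos (σ * p t) = cos (p t) := by rcases hσ with rfl | rfl <;> simp
    rw [sin_sq_eq_half_sub, mul_div_cancel₀ _ two_ne_zero, this]
    ring
  have henergy (t : ℝ) : q t ^ 2 / 2 - cos (p t) = 2 / k ^ 2 - 1 := by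
    have hd (s : ℝ) : HasDerivAt (fun s ↦ q s ^ 2 / 2 - cos (p s)) 0 s := by
      refine ((((hq s).pow 2).div_const 2).sub (hp s).cos).congr_deriv ?_
      simp
      ring
    have h := is_const_of_deriv_eq_zero (fun s ↦ (hd s).differentiableAt) (fun s ↦ (hd s).deriv) t 0
    rw [h, hp0, hq0, mul_pow, hσ2, cos_zero]
    ring
  have hsq (t : ℝ) : (σ * q t) ^ 2 = (2 / k) ^ 2 * (1 - k ^ 2 * sin (σ * p t / 2) ^ 2) := by
    rw [hsin, mul_pow, hσ2]
    have := henergy t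
    field_simp at this ⊢
    linear_combination this
  have hposr (t : ℝ) : 0 < 1 - k ^ 2 * sin (σ * p t / 2) ^ 2 :=
    one_sub_mul_sin_sq_pos ⟨hk, hk1⟩ _
  have hqc : Continuous q := continuous_iff_continuousAt.2 fun t ↦ (hq t).continuousAt
  have hpos : 0 < σ * q t := by
    by_contra! hneg
    have h0 : 0 < σ * q 0 := by
      rw [hq0, ← mul_assoc, ← pow_two, hσ2]
      positivity
    obtain ⟨s, hs⟩ := mem_range_of_exists_le_of_exists_ge (f := fun t ↦ σ * q t) (by fun_prop)
      ⟨t, hneg⟩ ⟨0, h0.le⟩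
    have h1 := hsq s
    have h2 := hposr s
    simp only at hs
    rw [hs] at h1
    have : 0 < (2 / k) ^ 2 * (1 - k ^ 2 * sin (σ * p s / 2) ^ 2) := by positivity
    linarith
  refine (pow_left_inj₀ hpos.le (by positivity) two_ne_zero).1 ?_
  rw [hsq, mul_pow, sq_sqrt (hposr t).le]

end Melnikov

/-- Let `k ∈ (0,1)`, `m, n` relatively prime positive integers with `ω = πm/(nkK(k))`.
Then for all real `β, δ, θ` and for each sign `σ = ±1`, the subharmonic Melnikov integral of
the forced damped pendulum along the rotational orbit `x̃^k_σ` (the solution of `ẋ₁ = x₂`,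
`ẋ₂ = −sin x₁` with `x̃^k_σ(0) = (0, σ·2/k)`) evaluates as
`∫₀^{2πm/ω} x̃^k_{σ,2}(t)(β cos(ωt+θ) − δ x̃^k_{σ,2}(t)) dt = −8nδE(k)/k + σ J̃₂ β cos θ`,
with `J̃₂ = 2π sech(kωK(k'))` if `n = 1`, and `J̃₂ = 0` if `n ≠ 1`. -/
theorem stmt_14 (k : ℝ) (hk : k ∈ Set.Ioo (0 : ℝ) 1) (m n : ℕ) (hm : 0 < m) (hn : 0 < n)
    (hmn : Nat.Coprime m n) (ω : ℝ) (hω : ω = π * m / (n * k * Kell k))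
    (σ : ℝ) (hσ : σ = 1 ∨ σ = -1)
    (x : ℝ → ℝ × ℝ) (hx0 : x 0 = (0, σ * (2 / k)))
    (hx1 : ∀ t : ℝ, HasDerivAt (fun s => (x s).1) ((x t).2) t)
    (hx2 : ∀ t : ℝ, HasDerivAt (fun s => (x s).2) (-Real.sin ((x t).1)) t)
    (β δ θ : ℝ) :
    ∫ t in (0 : ℝ)..(2 * π * m / ω), (x t).2 * (β * Real.cos (ω * t + θ) - δ * (x t).2)
      = -8 * n * δ * Eell k / k
        + σ * (if n = 1 then 2 * π * (1 / Real.cosh (k * ω * Kell (Real.sqrt (1 - k ^ 2)))) else 0)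
          * β * Real.cos θ := by
  have hk0 := hk.1
  have hKpos := Kell_pos hk
  have hσ2 : σ * σ = 1 := by rcases hσ with rfl | rfl <;> norm_num
  have hn0 : (0 : ℝ) < n := by exact_mod_cast hn
  have hm0 : (0 : ℝ) < m := by exact_mod_cast hm
  set p : ℝ → ℝ := fun s ↦ (x s).1 with hp
  set q : ℝ → ℝ := fun s ↦ (x s).2 with hq
  have hv := sign_mul_velocity_eq hk.1 hk.2 hσ (p := p) (q := q) (by simp [hp, hx0])
    (by simp [hq, hx0]) hx1 hx2
  set φ : ℝ → ℝ := fun t ↦ σ * p t / 2 with hφ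
  have hφd (t : ℝ) : HasDerivAt φ (√(1 - k ^ 2 * sin (φ t) ^ 2) / k) t := by
    refine (((hx1 t).const_mul σ).div_const 2).congr_deriv ?_
    have := hv t
    simp only [hq] at this
    rw [this]
    ring
  have hφ0 : φ 0 = 0 := by simp [hφ, hp, hx0]
  have hφc : Continuous φ := continuous_iff_continuousAt.2 fun t ↦ (hφd t).continuousAt
  have hφ'c : Continuous fun t ↦ √(1 - k ^ 2 * sin (φ t) ^ 2) / k := by fun_prop
  have hF (t : ℝ) : ellipticF k (φ t) = t / k := by
    have hd (s : ℝ) : HasDerivAt (fun s ↦ ellipticF k (φ s) - s / k) 0 s := by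
      refine (((hasDerivAt_ellipticF hk (φ s)).comp s (hφd s)).sub
        ((hasDerivAt_id s).div_const k)).congr_deriv ?_
      have := (sqrt_one_sub_mul_sin_sq_pos hk (φ s)).ne'
      field_simp
      ring
    have h := is_const_of_deriv_eq_zero (fun s ↦ (hd s).differentiableAt) (fun s ↦ (hd s).deriv) t 0
    simp only [hφ0, ellipticF_zero, zero_div] at h
    linarith
  have hT : 2 * π * m / ω = 2 * n * k * Kell k := by
    rw [hω]
    field_simp
  have hφT : φ (2 * n * k * Kell k) = n * π := by
    apply (strictMono_ellipticF hk).injective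
    rw [hF, ellipticF_nat_mul_pi hk]
    field_simp
  have ha : k * ω * (n * Kell k) = m * π := by
    rw [hω]
    field_simp
  have hqv (t : ℝ) : q t = 2 * σ * (√(1 - k ^ 2 * sin (φ t) ^ 2) / k) := by
    linear_combination σ * hv t - q t * hσ2
  have hforce : ∫ t in (0 : ℝ)..(2 * n * k * Kell k), cos (ω * t + θ) *
      (√(1 - k ^ 2 * sin (φ t) ^ 2) / k)
      = ∫ s in (0 : ℝ)..(n * π), cos (k * ω * ellipticF k s + θ) := by
    have hFc := continuous_ellipticF hk
    rw [← hφT, ← hφ0, ← intervalIntegral.integral_comp_mul_deriv (fun t _ ↦ hφd t)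
      hφ'c.continuousOn (by fun_prop), hφ0]
    refine intervalIntegral.integral_congr fun t _ ↦ ?_
    simp only [Function.comp, hF]
    congr 3
    field_simp
  have hdamp : ∫ t in (0 : ℝ)..(2 * n * k * Kell k), √(1 - k ^ 2 * sin (φ t) ^ 2) *
      (√(1 - k ^ 2 * sin (φ t) ^ 2) / k) = 2 * n * Eell k := by
    rw [← integral_sqrt_zero_nat_mul_pi k n, ← hφT, ← hφ0,
      ← intervalIntegral.integral_comp_mul_deriv (fun t _ ↦ hφd t)
      hφ'c.continuousOn (continuous_sqrt_one_sub_mul_sin_sq k), hφ0]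
    rfl
  have hintegrand (t : ℝ) : (x t).2 * (β * cos (ω * t + θ) - δ * (x t).2)
      = 2 * σ * β * (cos (ω * t + θ) * (√(1 - k ^ 2 * sin (φ t) ^ 2) / k))
        - 4 * δ / k * (√(1 - k ^ 2 * sin (φ t) ^ 2) * (√(1 - k ^ 2 * sin (φ t) ^ 2) / k)) := by
    have := hqv t
    simp only [hq] at this
    rw [this]
    linear_combination (-4 * δ * (√(1 - k ^ 2 * sin (φ t) ^ 2) / k) ^ 2) * hσ2
  simp only [hintegrand]
  rw [hT, intervalIntegral.integral_sub (Continuous.intervalIntegrable (by fun_prop) _ _)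
      (Continuous.intervalIntegrable (by fun_prop) _ _), intervalIntegral.integral_const_mul,
    intervalIntegral.integral_const_mul, hforce, hdamp,
    integral_cos_ellipticF_add hk hmn ha]
  split_ifs <;> ring
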